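/- Let 1 < p < ∞ with p ≠ 2, and let T belong to the operator-norm closure of the set of extreme points of the closed unit ball of L(ℓ^p_2, ℓ^p_2). Then either T is itself an extreme point of the closed unit ball of L(ℓ^p_2, ℓ^p_2), or there exist a real number s with |s| < 1 and surjective linear isometries U, V of ℓ^p_2 such that T = V ∘ D_s ∘ U, where D_s is the diagonal operator (z1, z2) ↦ (z1, s·z2). -/

import Mathlib

/-!
Up to sign, a non-extreme contraction `T` attains its norm at no more than one unit vector `x`: if
`T ± D` are contractions with `D ≠ 0`, strict convexity gives `D x = 0` at every norm-attaining `x`.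

Suppose first that `2 < p`, so that `F z = |z₁| ^ p + |z₂| ^ p` is twice continuously
differentiable. Let `T` be a non-extreme limit of extreme contractions `S n`. Each `S n` attains its
norm at some `x n`, and `x n → x` along a subsequence. The rank-one operator `escapeDir` kills
`x n` and takes values in the tangent line of the sphere at `S n (x n)`. As `S n` is extreme, adding
a small multiple of it leads out of the unit ball, so there are unit vectors `z n` at which
contractivity fails. They accumulate at norm-attaining vectors of `T`, hence at `± x`. Comparing
`F` along the tangent line at `x n` with `F` along its image, which agree to first order, shows in
the limit that the second-order condition `F''(T x)(T v, T v) ≤ F''(x)(v, v)` (with `v` tangent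
at `x`) is an equality (`hess_le_of_perturbation`). The same condition for `T ± D` then yields
`F''(T x)(D v, D v) = 0` with `D v ≠ 0`, so `T x` is a signed unit vector. The tangency of `T v`
gives `F''(T x)(T v, T v) = 0`, so `F''(x)(v, v) = 0` and `x` is a signed unit vector as well
(`isDegenerate_of_limit`). This says that `T` is `diag(1, s)` up to signed permutations, and
`|s| < 1` since `T` would otherwise attain its norm at a second unit vector.

For `p < 2` the transpose maps extreme contractions of `ℓ^p_2` to extreme contractions of `ℓ^q_2`,
where `q > 2` is the conjugate exponent (`transpose_mem_extremePoints`), and preserves the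
exceptional form.
-/

noncomputable section

/-- The ℓ^r norm on ℝ². -/
def pnorm (r : ℝ) (z : ℝ × ℝ) : ℝ := (|z.1| ^ r + |z.2| ^ r) ^ (1 / r)

/-- Apply a 2×2 real matrix, viewed as a linear operator ℝ² → ℝ², to a vector. -/
def app (A : Matrix (Fin 2) (Fin 2) ℝ) (z : ℝ × ℝ) : ℝ × ℝ :=
  (A 0 0 * z.1 + A 0 1 * z.2, A 1 0 * z.1 + A 1 1 * z.2)

/-- Operator norm from ℓ^p_2 to ℓ^q_2. -/
def opNorm (p q : ℝ) (A : Matrix (Fin 2) (Fin 2) ℝ) : ℝ :=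
  sSup {c : ℝ | ∃ z : ℝ × ℝ, pnorm p z = 1 ∧ c = pnorm q (app A z)}

/-- Closed unit ball of L(ℓ^p_2, ℓ^q_2). -/
def unitBall (p q : ℝ) : Set (Matrix (Fin 2) (Fin 2) ℝ) := {A | opNorm p q A ≤ 1}

/-- The rank-one operator u ⊗ v : z ↦ (u·z)·v. -/
def tensor (u v : ℝ × ℝ) : Matrix (Fin 2) (Fin 2) ℝ :=
  !![v.1 * u.1, v.1 * u.2; v.2 * u.1, v.2 * u.2]

/-- Signed power of a vector: (sgn z1 |z1|^r, sgn z2 |z2|^r). -/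
def spow (z : ℝ × ℝ) (r : ℝ) : ℝ × ℝ :=
  (Real.sign z.1 * |z.1| ^ r, Real.sign z.2 * |z.2| ^ r)

/-- Rotation: z^o = (−z2, z1). -/
def rot (z : ℝ × ℝ) : ℝ × ℝ := (-z.2, z.1)

section aux

open Filter Topology

/-! ### Contractions of the two-dimensional space -/

/-- The `p`-th power of the `ℓ^p` norm. -/
def powSum (p : ℝ) (z : ℝ × ℝ) : ℝ := |z.1| ^ p + |z.2| ^ p

/-- The contractions of `ℓ^p_2`, described through `powSum` instead of a supremum. -/
def contr (p : ℝ) : Set (Matrix (Fin 2) (Fin 2) ℝ) :=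
  {A | ∀ z, powSum p (app A z) ≤ powSum p z}

lemma powSum_nonneg (p : ℝ) (z : ℝ × ℝ) : 0 ≤ powSum p z := by
  unfold powSum; positivity

lemma powSum_smul (p c : ℝ) (z : ℝ × ℝ) : powSum p (c • z) = |c| ^ p * powSum p z := by
  simp only [powSum, Prod.smul_fst, Prod.smul_snd, smul_eq_mul, abs_mul]
  rw [Real.mul_rpow (abs_nonneg _) (abs_nonneg _), Real.mul_rpow (abs_nonneg _) (abs_nonneg _)]
  ring

lemma powSum_zero {p : ℝ} (hp : 0 < p) : powSum p 0 = 0 := by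
  simp [powSum, Real.zero_rpow hp.ne']

lemma powSum_pos {p : ℝ} {z : ℝ × ℝ} (hz : z ≠ 0) : 0 < powSum p z := by
  unfold powSum
  by_cases h1 : z.1 = 0
  · have h2 : z.2 ≠ 0 := fun h2 => hz (Prod.ext h1 h2)
    have := Real.rpow_pos_of_pos (abs_pos.2 h2) p
    positivity
  · have := Real.rpow_pos_of_pos (abs_pos.2 h1) p
    positivity

lemma continuous_powSum {p : ℝ} (hp : 0 < p) : Continuous (powSum p) := by
  unfold powSum
  exact ((continuous_fst.abs).rpow_const (fun _ => Or.inr hp.le)).add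
    ((continuous_snd.abs).rpow_const (fun _ => Or.inr hp.le))

lemma isCompact_powSum_sphere {p : ℝ} (hp : 0 < p) : IsCompact {z | powSum p z = 1} := by
  apply Metric.isCompact_of_isClosed_isBounded
  · exact isClosed_eq (continuous_powSum hp) continuous_const
  · refine (Metric.isBounded_closedBall (x := (0 : ℝ × ℝ)) (r := 1)).subset ?_
    intro z hz
    have key : ∀ a b : ℝ, |a| ^ p + |b| ^ p = 1 → |a| ≤ 1 := by
      intro a b h
      by_contra! h1
      have := Real.one_lt_rpow h1 hp
      have : 0 ≤ |b| ^ p := by positivity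
      linarith
    simp only [Metric.mem_closedBall, dist_zero_right, Prod.norm_def, Real.norm_eq_abs]
    have hz' : |z.1| ^ p + |z.2| ^ p = 1 := hz
    exact max_le (key _ _ hz') (key _ z.1 (by linarith))

lemma app_smul (A : Matrix (Fin 2) (Fin 2) ℝ) (c : ℝ) (z : ℝ × ℝ) :
    app A (c • z) = c • app A z := by
  ext <;> simp [app] <;> ring

lemma app_add (A : Matrix (Fin 2) (Fin 2) ℝ) (z w : ℝ × ℝ) :
    app A (z + w) = app A z + app A w := by
  ext <;> simp [app] <;> ring

lemma add_app (A B : Matrix (Fin 2) (Fin 2) ℝ) (z : ℝ × ℝ) :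
    app (A + B) z = app A z + app B z := by
  ext <;> simp [app] <;> ring

lemma sub_app (A B : Matrix (Fin 2) (Fin 2) ℝ) (z : ℝ × ℝ) :
    app (A - B) z = app A z - app B z := by
  ext <;> simp [app] <;> ring

lemma smul_app (A : Matrix (Fin 2) (Fin 2) ℝ) (c : ℝ) (z : ℝ × ℝ) :
    app (c • A) z = c • app A z := by
  ext <;> simp [app] <;> ring

lemma tendsto_app {ι : Type*} {l : Filter ι} {S : ι → Matrix (Fin 2) (Fin 2) ℝ}
    {A : Matrix (Fin 2) (Fin 2) ℝ} {z : ι → ℝ × ℝ} {w : ℝ × ℝ} (hS : Tendsto S l (𝓝 A))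
    (hz : Tendsto z l (𝓝 w)) : Tendsto (fun n => app (S n) (z n)) l (𝓝 (app A w)) := by
  have hc : Continuous (fun q : Matrix (Fin 2) (Fin 2) ℝ × (ℝ × ℝ) => app q.1 q.2) := by
    unfold app
    have := fun i j => (continuous_fst (X := Matrix (Fin 2) (Fin 2) ℝ) (Y := ℝ × ℝ)).matrix_elem i j
    refine Continuous.prodMk ?_ ?_ <;>
    · refine ((this _ _).mul ?_).add ((this _ _).mul ?_) <;> fun_prop
  exact (hc.tendsto (A, w)).comp (hS.prodMk_nhds hz)

/-- By homogeneity, contractivity only has to be tested on the unit sphere. -/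
lemma mem_contr_iff {p : ℝ} (hp : 0 < p) {A : Matrix (Fin 2) (Fin 2) ℝ} :
    A ∈ contr p ↔ ∀ z, powSum p z = 1 → powSum p (app A z) ≤ 1 := by
  refine ⟨fun h z hz => hz ▸ h z, fun h z => ?_⟩
  by_cases hz : z = 0
  · subst hz
    have : app A 0 = 0 := by ext <;> simp [app]
    rw [this]
  · have hpos := powSum_pos (p := p) hz
    set c : ℝ := (powSum p z) ^ (-(1 / p)) with hc
    have hc0 : 0 < c := Real.rpow_pos_of_pos hpos _
    have hcp : |c| ^ p * powSum p z = 1 := by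
      rw [abs_of_pos hc0, hc, ← Real.rpow_mul hpos.le]
      have : -(1 / p) * p = -1 := by field_simp
      rw [this, Real.rpow_neg_one]
      exact inv_mul_cancel₀ hpos.ne'
    have h1 := h (c • z) (by rw [powSum_smul, hcp])
    rw [app_smul, powSum_smul, ← hcp] at h1
    exact le_of_mul_le_mul_left h1 (Real.rpow_pos_of_pos (abs_pos.2 hc0.ne') p)

lemma pnorm_eq_one {p : ℝ} (hp : 0 < p) {z : ℝ × ℝ} : pnorm p z = 1 ↔ powSum p z = 1 := by
  have h0 := powSum_nonneg p z
  change (powSum p z) ^ (1 / p) = 1 ↔ _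
  have h := Real.rpow_left_inj h0 zero_le_one (z := 1 / p) (by positivity)
  rwa [Real.one_rpow] at h

lemma pnorm_le_one {p : ℝ} (hp : 0 < p) {z : ℝ × ℝ} : pnorm p z ≤ 1 ↔ powSum p z ≤ 1 := by
  have h0 := powSum_nonneg p z
  change (powSum p z) ^ (1 / p) ≤ 1 ↔ _
  have h := Real.rpow_le_rpow_iff h0 zero_le_one (z := 1 / p) (by positivity)
  rwa [Real.one_rpow] at h

lemma bddAbove_opNorm {p : ℝ} (hp : 0 < p) (A : Matrix (Fin 2) (Fin 2) ℝ) :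
    BddAbove {c : ℝ | ∃ z : ℝ × ℝ, pnorm p z = 1 ∧ c = pnorm p (app A z)} := by
  have hc : Continuous (fun z : ℝ × ℝ => pnorm p (app A z)) := by
    have h1 : Continuous (fun z : ℝ × ℝ => app A z) := by unfold app; fun_prop
    exact ((continuous_powSum hp).comp h1).rpow_const (fun _ => Or.inr (by positivity))
  refine ((isCompact_powSum_sphere hp).image hc).bddAbove.mono ?_
  rintro c ⟨z, hz, rfl⟩
  exact ⟨z, (pnorm_eq_one hp).1 hz, rfl⟩

lemma unitBall_eq_contr {p : ℝ} (hp : 0 < p) : unitBall p p = contr p := by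
  ext A
  rw [mem_contr_iff hp]
  constructor
  · intro h z hz
    rw [← pnorm_le_one hp]
    exact (le_csSup (bddAbove_opNorm hp A) ⟨z, (pnorm_eq_one hp).2 hz, rfl⟩).trans h
  · intro h
    change opNorm p p A ≤ 1
    rw [opNorm]
    refine csSup_le ⟨pnorm p (app A (1, 0)), (1, 0), ?_, rfl⟩ ?_
    · rw [pnorm_eq_one hp]; simp [powSum, Real.zero_rpow hp.ne']
    · rintro c ⟨z, hz, rfl⟩
      exact (pnorm_le_one hp).2 (h z ((pnorm_eq_one hp).1 hz))

lemma abs_le_pnorm {p : ℝ} (hp : 0 < p) (z : ℝ × ℝ) : |z.1| ≤ pnorm p z ∧ |z.2| ≤ pnorm p z := by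
  have key : ∀ a b : ℝ, |a| ≤ (|a| ^ p + |b| ^ p) ^ (1 / p) := by
    intro a b
    have h : (|a| ^ p) ^ (1 / p) ≤ (|a| ^ p + |b| ^ p) ^ (1 / p) :=
      Real.rpow_le_rpow (by positivity) (by have : 0 ≤ |b| ^ p := by positivity
                                            linarith) (by positivity)
    rwa [← Real.rpow_mul (abs_nonneg a), mul_one_div_cancel hp.ne', Real.rpow_one] at h
  refine ⟨key _ _, ?_⟩
  have := key z.2 z.1
  rwa [add_comm] at this

lemma abs_entry_le {p : ℝ} (hp : 0 < p) (A : Matrix (Fin 2) (Fin 2) ℝ) (i j : Fin 2) :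
    |A i j| ≤ opNorm p p A := by
  have h : ∀ z : ℝ × ℝ, powSum p z = 1 → pnorm p (app A z) ≤ opNorm p p A := fun z hz =>
    le_csSup (bddAbove_opNorm hp A) ⟨z, (pnorm_eq_one hp).2 hz, rfl⟩
  have h1 := h (1, 0) (by simp [powSum, Real.zero_rpow hp.ne'])
  have h2 := h (0, 1) (by simp [powSum, Real.zero_rpow hp.ne'])
  have a1 := abs_le_pnorm hp (app A (1, 0))
  have a2 := abs_le_pnorm hp (app A (0, 1))
  simp only [app, mul_one, mul_zero, add_zero, zero_add] at a1 a2 h1 h2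
  fin_cases i <;> fin_cases j <;> simp only [Fin.zero_eta, Fin.mk_one]
  exacts [a1.1.trans h1, a2.1.trans h2, a1.2.trans h1, a2.2.trans h2]

/-- Midpoint strict convexity of `|·| ^ p`. -/
lemma abs_rpow_midpoint {p : ℝ} (hp : 1 < p) (a d : ℝ) :
    2 * |a| ^ p ≤ |a + d| ^ p + |a - d| ^ p ∧
      (|a + d| ^ p + |a - d| ^ p ≤ 2 * |a| ^ p → d = 0) := by
  have htri : |a| ≤ (1 / 2) * |a + d| + (1 / 2) * |a - d| := by
    have := abs_add_le (a + d) (a - d)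
    rw [show a + d + (a - d) = 2 * a by ring, abs_mul, abs_two] at this
    linarith
  have h1 : |a| ^ p ≤ ((1 / 2) * |a + d| + (1 / 2) * |a - d|) ^ p :=
    Real.rpow_le_rpow (abs_nonneg _) htri (by linarith)
  have h2 : ((1 / 2) * |a + d| + (1 / 2) * |a - d|) ^ p
      ≤ (1 / 2) * |a + d| ^ p + (1 / 2) * |a - d| ^ p :=
    (convexOn_rpow hp.le).2 (abs_nonneg (a + d)) (abs_nonneg (a - d))
      (by norm_num) (by norm_num) (by norm_num)
  refine ⟨by linarith, fun hle => ?_⟩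
  have heq : |a + d| = |a - d| := by
    by_contra hne
    have h3 := (strictConvexOn_rpow hp).2 (abs_nonneg (a + d)) (abs_nonneg (a - d)) hne
      (show (0 : ℝ) < 1 / 2 by norm_num) (show (0 : ℝ) < 1 / 2 by norm_num) (by norm_num)
    simp only [smul_eq_mul] at h3
    linarith
  rw [heq] at hle
  have h4 : |a - d| ≤ |a| := by
    by_contra! h5
    have := Real.rpow_lt_rpow (abs_nonneg _) h5 (show 0 < p by linarith)
    linarith
  have h5 := sq_abs (a - d)
  have h6 := sq_abs (a + d)
  have h7 := sq_abs a
  rw [heq] at h6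
  have h8 : |a - d| ^ 2 ≤ |a| ^ 2 := by gcongr
  nlinarith [sq_nonneg d]

/-- Strict convexity of `ℓ^p_2` in midpoint form. -/
lemma eq_zero_of_powSum_le {p : ℝ} (hp : 1 < p) {y d : ℝ × ℝ} (h1 : powSum p (y + d) ≤ powSum p y)
    (h2 : powSum p (y - d) ≤ powSum p y) : d = 0 := by
  simp only [powSum, Prod.fst_add, Prod.snd_add, Prod.fst_sub, Prod.snd_sub] at h1 h2
  have a1 := abs_rpow_midpoint hp y.1 d.1
  have a2 := abs_rpow_midpoint hp y.2 d.2
  exact Prod.ext (a1.2 (by linarith)) (a2.2 (by linarith))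

lemma convex_contr {p : ℝ} (hp : 1 < p) : Convex ℝ (contr p) := by
  intro A hA B hB a b ha hb hab z
  have key : ∀ u w : ℝ, |a * u + b * w| ^ p ≤ a * |u| ^ p + b * |w| ^ p := by
    intro u w
    have h1 : |a * u + b * w| ≤ a * |u| + b * |w| := by
      refine (abs_add_le _ _).trans_eq ?_
      rw [abs_mul, abs_mul, abs_of_nonneg ha, abs_of_nonneg hb]
    exact (Real.rpow_le_rpow (abs_nonneg _) h1 (by linarith)).trans
      ((convexOn_rpow hp.le).2 (abs_nonneg u) (abs_nonneg w) ha hb hab)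
  have h1 := hA z
  have h2 := hB z
  rw [add_app, smul_app, smul_app]
  have k1 := key (app A z).1 (app B z).1
  have k2 := key (app A z).2 (app B z).2
  simp only [powSum, Prod.fst_add, Prod.snd_add, Prod.smul_fst, Prod.smul_snd, smul_eq_mul] at *
  have e : |z.1| ^ p + |z.2| ^ p = a * (|z.1| ^ p + |z.2| ^ p) + b * (|z.1| ^ p + |z.2| ^ p) := by
    rw [← add_mul, hab, one_mul]
  nlinarith [mul_le_mul_of_nonneg_left h1 ha, mul_le_mul_of_nonneg_left h2 hb]

/-- Extreme points of the unit ball in terms of symmetric perturbations. -/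
lemma mem_extremePoints_contr_iff {p : ℝ} (hp : 1 < p) {T : Matrix (Fin 2) (Fin 2) ℝ} :
    T ∈ Set.extremePoints ℝ (contr p) ↔
      T ∈ contr p ∧ ∀ D, T + D ∈ contr p → T - D ∈ contr p → D = 0 := by
  constructor
  · intro h
    refine ⟨h.1, fun D h1 h2 => ?_⟩
    have := h.2 h1 h2 ⟨1 / 2, 1 / 2, by norm_num, by norm_num, by norm_num, by module⟩
    simpa using this
  · rintro ⟨hT, h⟩
    refine ⟨hT, ?_⟩
    rintro A hA B hB ⟨a, b, ha, hb, hab, rfl⟩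
    have hm1 := min_le_left a b
    have hm2 := min_le_right a b
    have hm : 0 < min a b := lt_min ha hb
    set m := min a b
    have h0 := h (m • (A - B))
      (by have := convex_contr hp hA hB (show 0 ≤ a + m by linarith) (show 0 ≤ b - m by linarith)
            (by linarith)
          convert this using 1; module)
      (by have := convex_contr hp hA hB (show 0 ≤ a - m by linarith) (show 0 ≤ b + m by linarith)
            (by linarith)
          convert this using 1; module)
    have h1 : A = B := by
      rcases smul_eq_zero.1 h0 with h0 | h0
      · exact absurd h0 hm.ne'
      · exact sub_eq_zero.1 h0
    rw [← h1, ← add_smul, hab, one_smul]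

lemma isClosed_contr_seq {p : ℝ} (hp : 0 < p) {S : ℕ → Matrix (Fin 2) (Fin 2) ℝ}
    {T : Matrix (Fin 2) (Fin 2) ℝ} (hS : Tendsto S atTop (𝓝 T)) (h : ∀ n, S n ∈ contr p) :
    T ∈ contr p := fun z =>
  le_of_tendsto' (((continuous_powSum hp).tendsto _).comp (tendsto_app hS tendsto_const_nhds))
    (fun n => h n z)

/-- A matrix vanishing on two linearly independent vectors is zero. -/
lemma eq_zero_of_app {D : Matrix (Fin 2) (Fin 2) ℝ} {x z : ℝ × ℝ} (hx : app D x = 0)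
    (hz : app D z = 0) (h : x.1 * z.2 - x.2 * z.1 ≠ 0) : D = 0 := by
  simp only [app, Prod.mk_eq_zero] at hx hz
  have key : ∀ a b : ℝ, a * x.1 + b * x.2 = 0 → a * z.1 + b * z.2 = 0 → a = 0 ∧ b = 0 := by
    intro a b h1 h2
    constructor
    · apply (mul_eq_zero.1 (_ : a * (x.1 * z.2 - x.2 * z.1) = 0)).resolve_right h
      linear_combination z.2 * h1 - x.2 * h2
    · apply (mul_eq_zero.1 (_ : b * (x.1 * z.2 - x.2 * z.1) = 0)).resolve_right h
      linear_combination x.1 * h2 - z.1 * h1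
  obtain ⟨a, b⟩ := key _ _ hx.1 hz.1
  obtain ⟨c, d⟩ := key _ _ hx.2 hz.2
  ext i j
  fin_cases i <;> fin_cases j <;> simp [a, b, c, d]

/-- A perturbation staying in the unit ball on both sides vanishes where the norm is attained. -/
lemma app_eq_zero_of_attains {p : ℝ} (hp : 1 < p) {T D : Matrix (Fin 2) (Fin 2) ℝ}
    (h1 : T + D ∈ contr p) (h2 : T - D ∈ contr p) {x : ℝ × ℝ}
    (hx : powSum p (app T x) = powSum p x) : app D x = 0 := by
  apply eq_zero_of_powSum_le hp (y := app T x)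
  · rw [← add_app, hx]; exact h1 x
  · rw [← sub_app, hx]; exact h2 x

/-- A limit of unit vectors `z n` with `‖S n (z n)‖ ≥ 1` is a norm-attaining vector of the
contraction `lim S n`. -/
lemma attains_of_tendsto {p : ℝ} (hp : 0 < p) {S : ℕ → Matrix (Fin 2) (Fin 2) ℝ}
    {T : Matrix (Fin 2) (Fin 2) ℝ} (hS : Tendsto S atTop (𝓝 T)) (hT : T ∈ contr p)
    {z : ℕ → ℝ × ℝ} {w : ℝ × ℝ} (hz : Tendsto z atTop (𝓝 w))
    (h1 : ∀ n, powSum p (z n) = 1) (h2 : ∀ n, 1 ≤ powSum p (app (S n) (z n))) :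
    powSum p w = 1 ∧ powSum p (app T w) = 1 := by
  have hc := (continuous_powSum hp)
  have hw : powSum p w = 1 := by
    refine tendsto_nhds_unique ((hc.tendsto w).comp hz) ?_
    simp only [Function.comp_def, h1, tendsto_const_nhds]
  refine ⟨hw, le_antisymm (hw ▸ hT w) ?_⟩
  exact ge_of_tendsto' ((hc.tendsto _).comp (tendsto_app hS hz)) h2

lemma exists_of_notMem_contr {p : ℝ} (hp : 0 < p) {A : Matrix (Fin 2) (Fin 2) ℝ}
    (h : A ∉ contr p) : ∃ z, powSum p z = 1 ∧ 1 < powSum p (app A z) := by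
  rw [mem_contr_iff hp] at h
  push Not at h
  exact h

/-- An extreme contraction can be pushed out of the unit ball along any direction `M ≠ 0`. -/
lemma exists_perturbation {p : ℝ} (hp : 1 < p) {S M : Matrix (Fin 2) (Fin 2) ℝ}
    (hS : S ∈ Set.extremePoints ℝ (contr p)) (hM : M ≠ 0) {δ : ℝ} (hδ : 0 < δ) :
    ∃ (e : ℝ) (z : ℝ × ℝ), |e| ≤ δ ∧ powSum p z = 1 ∧ 1 < powSum p (app (S + e • M) z) := by
  rw [mem_extremePoints_contr_iff hp] at hS
  have h : S + δ • M ∉ contr p ∨ S - δ • M ∉ contr p := by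
    by_contra! h
    exact (smul_ne_zero hδ.ne' hM) (hS.2 _ h.1 h.2)
  rcases h with h | h
  · obtain ⟨z, hz⟩ := exists_of_notMem_contr (by linarith) h
    exact ⟨δ, z, (abs_of_pos hδ).le, hz⟩
  · obtain ⟨z, hz⟩ := exists_of_notMem_contr (by linarith) h
    refine ⟨-δ, z, by rw [abs_neg, abs_of_pos hδ], ?_⟩
    rwa [neg_smul, ← sub_eq_add_neg]

/-- Perturbing along the identity by `1 / (n + 1)` and passing to the limit. -/
lemma exists_attains {p : ℝ} (hp : 1 < p) {S : Matrix (Fin 2) (Fin 2) ℝ}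
    (hS : S ∈ Set.extremePoints ℝ (contr p)) :
    ∃ x, powSum p x = 1 ∧ powSum p (app S x) = 1 := by
  have hp0 : 0 < p := by linarith
  choose e z he hz1 hz2 using fun n : ℕ =>
    exists_perturbation hp hS (one_ne_zero : (1 : Matrix (Fin 2) (Fin 2) ℝ) ≠ 0)
      (Nat.one_div_pos_of_nat (α := ℝ) (n := n))
  obtain ⟨x, -, φ, hφ, hx⟩ := (isCompact_powSum_sphere hp0).tendsto_subseq hz1
  have he0 : Tendsto e atTop (𝓝 0) :=
    squeeze_zero_norm he tendsto_one_div_add_atTop_nhds_zero_nat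
  have hlim : Tendsto (fun n => S + e n • (1 : Matrix (Fin 2) (Fin 2) ℝ)) atTop (𝓝 S) := by
    simpa using (he0.smul_const (1 : Matrix (Fin 2) (Fin 2) ℝ)).const_add S
  exact ⟨x, attains_of_tendsto hp0 (hlim.comp hφ.tendsto_atTop) hS.1 hx (fun n => hz1 _)
    (fun n => (hz2 _).le)⟩

/-! ### Second-order comparison of `powSum` for `2 < p` -/

/-- The gradient of `powSum p` divided by `p`. -/
def grad (p : ℝ) (z : ℝ × ℝ) : ℝ × ℝ := (|z.1| ^ (p - 2) * z.1, |z.2| ^ (p - 2) * z.2)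

/-- The standard inner product on `ℝ × ℝ`. -/
def dot (z w : ℝ × ℝ) : ℝ := z.1 * w.1 + z.2 * w.2

/-- The Hessian of `powSum p` at `x`, divided by `p * (p - 1)` and evaluated at `(v, v)`. -/
def hess (p : ℝ) (x v : ℝ × ℝ) : ℝ := |x.1| ^ (p - 2) * v.1 ^ 2 + |x.2| ^ (p - 2) * v.2 ^ 2

lemma abs_rpow_sub_two_mul {p : ℝ} (hp : 1 < p) (a : ℝ) : |a| ^ (p - 2) * a * a = |a| ^ p := by
  by_cases h : a = 0
  · subst h; simp [Real.zero_rpow (show p ≠ 0 by linarith)]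
  · rw [mul_assoc, ← sq, ← sq_abs, ← Real.rpow_natCast, ← Real.rpow_add (abs_pos.2 h)]
    norm_num

lemma dot_grad_self {p : ℝ} (hp : 1 < p) (x : ℝ × ℝ) : dot (grad p x) x = powSum p x := by
  simp only [dot, grad, powSum, abs_rpow_sub_two_mul hp]

lemma continuous_grad {p : ℝ} (hp : 2 < p) : Continuous (grad p) := by
  unfold grad
  have h : Continuous fun a : ℝ => |a| ^ (p - 2) * a :=
    (continuous_abs.rpow_const (fun _ => Or.inr (by linarith))).mul continuous_id
  exact (h.comp continuous_fst).prodMk (h.comp continuous_snd)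

lemma continuous_dot : Continuous fun q : (ℝ × ℝ) × (ℝ × ℝ) => dot q.1 q.2 := by
  unfold dot; fun_prop

lemma continuous_hess {p : ℝ} (hp : 2 < p) :
    Continuous fun q : (ℝ × ℝ) × (ℝ × ℝ) => hess p q.1 q.2 := by
  unfold hess
  have h : Continuous fun a : ℝ => |a| ^ (p - 2) :=
    continuous_abs.rpow_const (fun _ => Or.inr (by linarith))
  have h1 : Continuous fun q : (ℝ × ℝ) × (ℝ × ℝ) => |q.1.1| ^ (p - 2) := h.comp (by fun_prop)
  have h2 : Continuous fun q : (ℝ × ℝ) × (ℝ × ℝ) => |q.1.2| ^ (p - 2) := h.comp (by fun_prop)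
  fun_prop

lemma tendsto_hess {p : ℝ} (hp : 2 < p) {x v : ℕ → ℝ × ℝ} {x' v' : ℝ × ℝ}
    (hx : Tendsto x atTop (𝓝 x')) (hv : Tendsto v atTop (𝓝 v')) :
    Tendsto (fun n => hess p (x n) (v n)) atTop (𝓝 (hess p x' v')) :=
  Tendsto.comp (g := fun q : (ℝ × ℝ) × (ℝ × ℝ) => hess p q.1 q.2) (f := fun n => (x n, v n))
    ((continuous_hess hp).tendsto (x', v')) (hx.prodMk_nhds hv)

lemma tendsto_dot {x v : ℕ → ℝ × ℝ} {x' v' : ℝ × ℝ}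
    (hx : Tendsto x atTop (𝓝 x')) (hv : Tendsto v atTop (𝓝 v')) :
    Tendsto (fun n => dot (x n) (v n)) atTop (𝓝 (dot x' v')) :=
  Tendsto.comp (g := fun q : (ℝ × ℝ) × (ℝ × ℝ) => dot q.1 q.2) (f := fun n => (x n, v n))
    (continuous_dot.tendsto (x', v')) (hx.prodMk_nhds hv)

lemma hasDerivAt_abs_rpow_mul {r : ℝ} (hr : 0 < r) (a : ℝ) :
    HasDerivAt (fun t : ℝ => |t| ^ r * t) ((r + 1) * |a| ^ r) a := by
  by_cases h : a = 0
  · subst h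
    rw [hasDerivAt_iff_tendsto_slope]
    have hc : Continuous fun a : ℝ => |a| ^ r :=
      continuous_abs.rpow_const (fun _ => Or.inr hr.le)
    have h1 := (hc.tendsto 0).mono_left (nhdsWithin_le_nhds (s := {0}ᶜ))
    simp only [abs_zero, Real.zero_rpow hr.ne', mul_zero] at h1 ⊢
    refine h1.congr' ?_
    filter_upwards [self_mem_nhdsWithin] with t ht
    have ht : t ≠ 0 := ht
    simp [slope_def_field, Real.zero_rpow hr.ne', ht]
  · have ha := abs_pos.2 h
    have h1 := ((hasDerivAt_abs h).rpow_const (p := r) (Or.inl ha.ne')).mul (hasDerivAt_id a)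
    refine h1.congr_deriv ?_
    have h2 : |a| ^ (r - 1) * |a| = |a| ^ r := by
      rw [← Real.rpow_add_one ha.ne']; norm_num
    have h3 : (SignType.sign a : ℝ) * a = |a| := sign_mul_self a
    simp only [id, mul_one]
    linear_combination r * |a| ^ (r - 1) * h3 + r * h2

lemma hasDerivAt_powSum {p : ℝ} (hp : 1 < p) (x v : ℝ × ℝ) (t : ℝ) :
    HasDerivAt (fun t : ℝ => powSum p (x + t • v)) (p * dot (grad p (x + t • v)) v) t := by
  have key : ∀ a b : ℝ, HasDerivAt (fun t : ℝ => |a + t * b| ^ p)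
      (p * |a + t * b| ^ (p - 2) * (a + t * b) * b) t := by
    intro a b
    have h1 : HasDerivAt (fun t : ℝ => a + t * b) b t := by
      simpa using ((hasDerivAt_id t).mul_const b).const_add a
    exact (hasDerivAt_abs_rpow (a + t * b) hp).comp t h1
  refine ((key x.1 v.1).add (key x.2 v.2)).congr_deriv ?_
  simp [dot, grad]; ring

lemma hasDerivAt_dot_grad {p : ℝ} (hp : 2 < p) (x v : ℝ × ℝ) (t : ℝ) :
    HasDerivAt (fun t : ℝ => p * dot (grad p (x + t • v)) v)
      (p * (p - 1) * hess p (x + t • v) v) t := by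
  have key : ∀ a b : ℝ, HasDerivAt (fun t : ℝ => |a + t * b| ^ (p - 2) * (a + t * b) * b)
      ((p - 2 + 1) * |a + t * b| ^ (p - 2) * b * b) t := by
    intro a b
    have h1 : HasDerivAt (fun t : ℝ => a + t * b) b t := by
      simpa using ((hasDerivAt_id t).mul_const b).const_add a
    exact ((hasDerivAt_abs_rpow_mul (show 0 < p - 2 by linarith) (a + t * b)).comp t h1).mul_const b
  refine (((key x.1 v.1).add (key x.2 v.2)).const_mul p).congr_deriv ?_
  simp [hess]; ring

lemma hess_smul (p t : ℝ) (x v : ℝ × ℝ) : hess p x (t • v) = t ^ 2 * hess p x v := by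
  simp [hess]; ring

/-- Second-order mean value theorem for the difference of the functions `powSum p` along two lines
which agree to first order at `0`. -/
lemma exists_hess_eq {p : ℝ} (hp : 2 < p) {x y v w : ℝ × ℝ} (h0 : powSum p x = powSum p y)
    (h1 : dot (grad p x) v = dot (grad p y) w) :
    ∃ θ k : ℝ, 0 < θ ∧ θ < 1 ∧ 0 < k ∧
      powSum p (x + v) - powSum p (y + w)
        = k * (hess p (x + θ • v) v - hess p (y + θ • w) w) := by
  have d1 : ∀ t, HasDerivAt (fun t : ℝ => powSum p (x + t • v) - powSum p (y + t • w))
      (p * dot (grad p (x + t • v)) v - p * dot (grad p (y + t • w)) w) t := fun t =>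
    (hasDerivAt_powSum (by linarith) x v t).sub (hasDerivAt_powSum (by linarith) y w t)
  have d2 : ∀ t, HasDerivAt
      (fun t : ℝ => p * dot (grad p (x + t • v)) v - p * dot (grad p (y + t • w)) w)
      (p * (p - 1) * hess p (x + t • v) v - p * (p - 1) * hess p (y + t • w) w) t := fun t =>
    (hasDerivAt_dot_grad hp x v t).sub (hasDerivAt_dot_grad hp y w t)
  obtain ⟨c, hc, e1⟩ := exists_hasDerivAt_eq_slope _ _ (zero_lt_one' ℝ)
    (fun t _ => (d1 t).continuousAt.continuousWithinAt) (fun t _ => d1 t)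
  obtain ⟨θ, hθ, e2⟩ := exists_hasDerivAt_eq_slope _ _ hc.1
    (fun t _ => (d2 t).continuousAt.continuousWithinAt) (fun t _ => d2 t)
  refine ⟨θ, c * (p * (p - 1)), hθ.1, hθ.2.trans hc.2,
    mul_pos hc.1 (mul_pos (by linarith) (by linarith)), ?_⟩
  have hc0 := hc.1.ne'
  simp only [zero_smul, add_zero, one_smul, h0, h1, sub_self, sub_zero, div_one] at e1 e2
  rw [← e1]
  rw [eq_div_iff hc0] at e2
  linear_combination -e2

/-- Passing to the limit in a second-order comparison of `powSum p` along two lines. -/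
lemma hess_le_of_tendsto {p : ℝ} (hp : 2 < p) {x y v w : ℕ → ℝ × ℝ} {t : ℕ → ℝ}
    {x' y' v' w' : ℝ × ℝ} (hx : Tendsto x atTop (𝓝 x')) (hy : Tendsto y atTop (𝓝 y'))
    (hv : Tendsto v atTop (𝓝 v')) (hw : Tendsto w atTop (𝓝 w')) (ht : Tendsto t atTop (𝓝 0))
    (h : ∀ᶠ n in atTop, t n ≠ 0 ∧ powSum p (x n) = powSum p (y n) ∧
      dot (grad p (x n)) (v n) = dot (grad p (y n)) (w n) ∧
      powSum p (x n + t n • v n) ≤ powSum p (y n + t n • w n)) :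
    hess p x' v' ≤ hess p y' w' := by
  have key : ∀ n, ∃ θ : ℝ, |θ| ≤ 1 ∧ ((t n ≠ 0 ∧ powSum p (x n) = powSum p (y n) ∧
      dot (grad p (x n)) (v n) = dot (grad p (y n)) (w n) ∧
      powSum p (x n + t n • v n) ≤ powSum p (y n + t n • w n)) →
      hess p (x n + (θ * t n) • v n) (v n) ≤ hess p (y n + (θ * t n) • w n) (w n)) := by
    intro n
    by_cases hn : t n ≠ 0 ∧ powSum p (x n) = powSum p (y n) ∧
      dot (grad p (x n)) (v n) = dot (grad p (y n)) (w n) ∧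
      powSum p (x n + t n • v n) ≤ powSum p (y n + t n • w n)
    · obtain ⟨h1, h2, h3, h4⟩ := hn
      obtain ⟨θ, k, hθ0, hθ1, hk, e⟩ := exists_hess_eq hp (v := t n • v n) (w := t n • w n) h2 (by
        simp only [dot, Prod.smul_fst, Prod.smul_snd, smul_eq_mul] at h3 ⊢
        linear_combination t n * h3)
      refine ⟨θ, by rw [abs_of_pos hθ0]; exact hθ1.le, fun _ => ?_⟩
      rw [hess_smul, hess_smul, smul_smul, smul_smul] at e
      have hk' : 0 < k * t n ^ 2 := by positivity
      have h5 : k * t n ^ 2 * (hess p (x n + (θ * t n) • v n) (v n)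
          - hess p (y n + (θ * t n) • w n) (w n)) ≤ 0 := by linarith
      exact sub_nonpos.1 (nonpos_of_mul_nonpos_right h5 hk')
    · exact ⟨0, by simp, fun h => absurd h hn⟩
  choose θ hθ hcmp using key
  have hθt : Tendsto (fun n => θ n * t n) atTop (𝓝 0) := by
    refine squeeze_zero_norm (fun n => ?_) (by simpa using ht.norm)
    rw [norm_mul]
    exact mul_le_of_le_one_left (norm_nonneg _) (hθ n)
  have hx1 : Tendsto (fun n => x n + (θ n * t n) • v n) atTop (𝓝 x') := by
    simpa using hx.add (hθt.smul hv)
  have hy1 : Tendsto (fun n => y n + (θ n * t n) • w n) atTop (𝓝 y') := by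
    simpa using hy.add (hθt.smul hw)
  exact le_of_tendsto_of_tendsto (tendsto_hess hp hx1 hv) (tendsto_hess hp hy1 hw)
    (h.mono fun n hn => hcmp n hn)

/-- First-order condition at a norm-attaining vector. -/
lemma dot_grad_app {p : ℝ} (hp : 1 < p) {A : Matrix (Fin 2) (Fin 2) ℝ} (hA : A ∈ contr p)
    {x : ℝ × ℝ} (hx : powSum p (app A x) = powSum p x) (v : ℝ × ℝ) :
    dot (grad p x) v = dot (grad p (app A x)) (app A v) := by
  have d := (hasDerivAt_powSum hp x v 0).sub (hasDerivAt_powSum hp (app A x) (app A v) 0)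
  have hmin : IsLocalMin (fun t : ℝ => powSum p (x + t • v) - powSum p (app A x + t • app A v)) 0 :=
    Eventually.of_forall fun t => by
      have := hA (x + t • v)
      rw [app_add, app_smul] at this
      simp [hx, this]
  have h := hmin.hasDerivAt_eq_zero d
  simp only [zero_smul, add_zero] at h
  have : p * (dot (grad p x) v - dot (grad p (app A x)) (app A v)) = 0 := by linarith
  exact sub_eq_zero.1 ((mul_eq_zero.1 this).resolve_left (by linarith))

/-- Second-order condition at a norm-attaining vector. -/
lemma hess_app_le {p : ℝ} (hp : 2 < p) {A : Matrix (Fin 2) (Fin 2) ℝ} (hA : A ∈ contr p)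
    {x : ℝ × ℝ} (hx : powSum p (app A x) = powSum p x) (v : ℝ × ℝ) :
    hess p (app A x) (app A v) ≤ hess p x v := by
  refine hess_le_of_tendsto hp (x := fun _ => app A x) (y := fun _ => x) (v := fun _ => app A v)
    (w := fun _ => v) tendsto_const_nhds tendsto_const_nhds tendsto_const_nhds tendsto_const_nhds
    (tendsto_one_div_add_atTop_nhds_zero_nat (𝕜 := ℝ)) (Eventually.of_forall fun n => ?_)
  refine ⟨(Nat.one_div_pos_of_nat).ne', hx, (dot_grad_app (by linarith) hA hx v).symm, ?_⟩
  rw [← app_smul, ← app_add]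
  exact hA _

/-! ### Limits of extreme contractions for `2 < p` -/

lemma app_tensor (u v z : ℝ × ℝ) : app (tensor u v) z = dot u z • v := by
  ext <;> simp [app, tensor, dot] <;> ring

lemma tensor_ne_zero {u v : ℝ × ℝ} (hu : u ≠ 0) (hv : v ≠ 0) : tensor u v ≠ 0 := by
  intro h
  have h1 := app_tensor u v u
  rw [h] at h1
  have h2 : dot u u • v = 0 := by rw [← h1]; ext <;> simp [app]
  rcases smul_eq_zero.1 h2 with h3 | h3
  · apply hu
    simp only [dot] at h3
    ext
    · exact pow_eq_zero_iff (two_ne_zero) |>.1 (by nlinarith [sq_nonneg u.1, sq_nonneg u.2])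
    · exact pow_eq_zero_iff (two_ne_zero) |>.1 (by nlinarith [sq_nonneg u.1, sq_nonneg u.2])
  · exact hv h3

lemma continuous_rot : Continuous rot := by unfold rot; fun_prop

lemma rot_ne_zero {z : ℝ × ℝ} (hz : z ≠ 0) : rot z ≠ 0 := by
  intro h
  simp only [rot, Prod.mk_eq_zero, neg_eq_zero] at h
  exact hz (Prod.ext h.2 h.1)

lemma tendsto_tensor {u v : ℕ → ℝ × ℝ} {u' v' : ℝ × ℝ}
    (hu : Tendsto u atTop (𝓝 u')) (hv : Tendsto v atTop (𝓝 v')) :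
    Tendsto (fun n => tensor (u n) (v n)) atTop (𝓝 (tensor u' v')) := by
  have hc : Continuous fun q : (ℝ × ℝ) × (ℝ × ℝ) => tensor q.1 q.2 := by
    refine continuous_matrix fun i j => ?_
    fin_cases i <;> fin_cases j <;> simp [tensor] <;> fun_prop
  exact Tendsto.comp (g := fun q : (ℝ × ℝ) × (ℝ × ℝ) => tensor q.1 q.2)
    (f := fun n => (u n, v n)) (hc.tendsto (u', v')) (hu.prodMk_nhds hv)

/-- The direction in which `A`, attaining its norm at `x`, is perturbed: the operators
`A + e • escapeDir p x (app A x)` map `x` to `app A x` and satisfy the first-order condition of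
contractivity at `x`. -/
def escapeDir (p : ℝ) (x y : ℝ × ℝ) : Matrix (Fin 2) (Fin 2) ℝ :=
  tensor (rot x) (rot (grad p y))

lemma escapeDir_ne_zero {p : ℝ} (hp : 1 < p) {x y : ℝ × ℝ} (hx : powSum p x = 1)
    (hy : powSum p y = 1) : escapeDir p x y ≠ 0 := by
  refine tensor_ne_zero (rot_ne_zero ?_) (rot_ne_zero ?_)
  · rintro rfl
    rw [powSum_zero (by linarith)] at hx
    exact zero_ne_one hx
  · intro h
    rw [← dot_grad_self hp, h] at hy
    simp [dot] at hy

/-- If `S n` are contractions attaining their norm at `x n`, and small perturbations of `S n` in the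
direction `escapeDir` fail to be contractions, then either the limit `T` attains its norm at two
independent vectors, or the second-order condition of contractivity degenerates at
`x' = lim x n`. -/
lemma hess_le_of_perturbation {p : ℝ} (hp : 2 < p) {S : ℕ → Matrix (Fin 2) (Fin 2) ℝ}
    {T : Matrix (Fin 2) (Fin 2) ℝ} {x z : ℕ → ℝ × ℝ} {e : ℕ → ℝ} {x' z' : ℝ × ℝ}
    (hS : ∀ n, S n ∈ contr p) (hST : Tendsto S atTop (𝓝 T)) (he : Tendsto e atTop (𝓝 0))
    (hx : Tendsto x atTop (𝓝 x')) (hz : Tendsto z atTop (𝓝 z'))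
    (hx1 : ∀ n, powSum p (x n) = 1) (hx2 : ∀ n, powSum p (app (S n) (x n)) = 1)
    (hz1 : ∀ n, powSum p (z n) = 1)
    (hz2 : ∀ n, 1 < powSum p (app (S n + e n • escapeDir p (x n) (app (S n) (x n))) (z n)))
    (hdep : ∀ w, powSum p w = 1 → powSum p (app T w) = 1 → dot (rot x') w = 0) :
    hess p x' (rot (grad p x')) ≤ hess p (app T x') (app T (rot (grad p x'))) := by
  have hp0 : 0 < p := by linarith
  have hp1 : 1 < p := by linarith
  have hT : T ∈ contr p := isClosed_contr_seq hp0 hST hS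
  have hy : Tendsto (fun n => app (S n) (x n)) atTop (𝓝 (app T x')) := tendsto_app hST hx
  have hgrad : Tendsto (fun n => grad p (x n)) atTop (𝓝 (grad p x')) :=
    ((continuous_grad hp).tendsto _).comp hx
  have hv : Tendsto (fun n => rot (grad p (x n))) atTop (𝓝 (rot (grad p x'))) :=
    (continuous_rot.tendsto _).comp hgrad
  have hM : Tendsto (fun n => escapeDir p (x n) (app (S n) (x n))) atTop
      (𝓝 (escapeDir p x' (app T x'))) :=
    tendsto_tensor ((continuous_rot.tendsto _).comp hx)
      ((continuous_rot.tendsto _).comp (((continuous_grad hp).tendsto _).comp hy))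
  set R : ℕ → Matrix (Fin 2) (Fin 2) ℝ :=
    fun n => S n + e n • escapeDir p (x n) (app (S n) (x n)) with hR
  have hRT : Tendsto R atTop (𝓝 T) := by
    simpa using hST.add (he.smul hM)
  obtain ⟨hzlim, hTzlim⟩ := attains_of_tendsto hp0 hRT hT hz hz1 (fun n => (hz2 n).le)
  have hperp := hdep z' hzlim hTzlim
  -- coordinates of `z n` in the basis formed by `x n` and the tangent vector `rot (grad p (x n))`
  set α : ℕ → ℝ := fun n => dot (grad p (x n)) (z n) with hα
  set β : ℕ → ℝ := fun n => dot (rot (x n)) (z n) with hβ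
  have hαlim : Tendsto α atTop (𝓝 (dot (grad p x') z')) := tendsto_dot hgrad hz
  have hβlim : Tendsto β atTop (𝓝 0) := by
    rw [← hperp]
    exact tendsto_dot ((continuous_rot.tendsto _).comp hx) hz
  have hdecomp : ∀ x z : ℝ × ℝ, powSum p x = 1 →
      z = dot (grad p x) z • x + dot (rot x) z • rot (grad p x) := by
    intro x z h
    rw [← dot_grad_self hp1] at h
    simp only [dot] at h
    ext <;> simp only [dot, rot, Prod.fst_add, Prod.snd_add, Prod.smul_fst, Prod.smul_snd,
      smul_eq_mul]
    · linear_combination -z.1 * h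
    · linear_combination -z.2 * h
  have hx'1 : powSum p x' = 1 := by
    refine tendsto_nhds_unique (((continuous_powSum hp0).tendsto x').comp hx) ?_
    simp only [Function.comp_def, hx1, tendsto_const_nhds]
  have hα0 : dot (grad p x') z' ≠ 0 := by
    intro h0
    have h := hdecomp x' z' hx'1
    rw [hperp, h0, zero_smul, zero_smul, add_zero] at h
    rw [h, powSum_zero hp0] at hzlim
    exact zero_ne_one hzlim
  have hαev : ∀ᶠ n in atTop, α n ≠ 0 := hαlim.eventually_ne hα0
  have hRx : ∀ n, app (R n) (x n) = app (S n) (x n) := by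
    intro n
    have : dot (rot (x n)) (x n) = 0 := by simp only [dot, rot]; ring
    rw [hR, add_app, smul_app, escapeDir, app_tensor, this, zero_smul, smul_zero, add_zero]
  refine hess_le_of_tendsto hp hx hy hv (tendsto_app hRT hv)
    (t := fun n => β n / α n) (by have h := hβlim.div hαlim hα0; rw [zero_div] at h; exact h) ?_
  filter_upwards [hαev] with n hn
  have hzn : z n = α n • (x n + (β n / α n) • rot (grad p (x n))) := by
    rw [smul_add, smul_smul, mul_div_cancel₀ _ hn]
    exact hdecomp _ _ (hx1 n)
  have hαp : 0 < |α n| ^ p := Real.rpow_pos_of_pos (abs_pos.2 hn) p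
  have hlt : powSum p (x n + (β n / α n) • rot (grad p (x n))) <
      powSum p (app (S n) (x n) + (β n / α n) • app (R n) (rot (grad p (x n)))) := by
    have h := (hz1 n).trans_lt (hz2 n)
    rw [hzn, app_smul, powSum_smul, powSum_smul] at h
    have h' := lt_of_mul_lt_mul_left h hαp.le
    rw [app_add, app_smul] at h'
    rw [← hRx n]
    exact h'
  refine ⟨?_, ?_, ?_, hlt.le⟩
  · intro h0
    rw [h0, zero_smul, zero_smul, add_zero, add_zero, hx1, hx2] at hlt
    exact lt_irrefl _ hlt
  · rw [hx1, hx2]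
  · rw [dot_grad_app hp1 (hS n) (by rw [hx1, hx2]) (rot (grad p (x n))), hR]
    simp only [add_app, smul_app, escapeDir, app_tensor]
    simp only [dot, rot, Prod.fst_add, Prod.snd_add, Prod.smul_fst, Prod.smul_snd, smul_eq_mul]
    ring

/-- Up to signed permutations on both sides, `T` is `diag(1, s)` with `|s| < 1`. -/
def IsDegenerate (T : Matrix (Fin 2) (Fin 2) ℝ) : Prop :=
  ∃ e s : ℝ, (e = 1 ∨ e = -1) ∧ |s| < 1 ∧
    (T = !![e, 0; 0, s] ∨ T = !![0, e; s, 0] ∨ T = !![0, s; e, 0] ∨ T = !![s, 0; 0, e])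

/-- A non-extreme limit of extreme contractions is degenerate. Such a limit `T` attains its norm in a
single direction `x'`, where the second-order condition holds with equality; the two sided
perturbations `T ± D` then force `x'` and `T x'` to be signed unit vectors. -/
lemma isDegenerate_of_limit {p : ℝ} (hp : 2 < p) {S : ℕ → Matrix (Fin 2) (Fin 2) ℝ}
    {T : Matrix (Fin 2) (Fin 2) ℝ} (hS : ∀ n, S n ∈ Set.extremePoints ℝ (contr p))
    (hST : Tendsto S atTop (𝓝 T)) (hT : T ∉ Set.extremePoints ℝ (contr p)) : IsDegenerate T := by
  have hp0 : 0 < p := by linarith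
  have hp1 : 1 < p := by linarith
  have hTc : T ∈ contr p := isClosed_contr_seq hp0 hST fun n => (hS n).1
  obtain ⟨D, hD1, hD2, hD⟩ : ∃ D, T + D ∈ contr p ∧ T - D ∈ contr p ∧ D ≠ 0 := by
    by_contra! h
    exact hT ((mem_extremePoints_contr_iff hp1).2 ⟨hTc, h⟩)
  have hdep : ∀ x z : ℝ × ℝ, powSum p (app T x) = powSum p x → powSum p (app T z) = powSum p z →
      dot (rot x) z = 0 := by
    intro x z hx hz
    by_contra h
    refine hD (eq_zero_of_app (app_eq_zero_of_attains hp1 hD1 hD2 hx)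
      (app_eq_zero_of_attains hp1 hD1 hD2 hz) fun h' => h ?_)
    simp only [dot, rot]
    linarith
  choose x hx1 hx2 using fun n => exists_attains hp1 (hS n)
  choose e z he hz1 hz2 using fun n : ℕ =>
    exists_perturbation hp1 (hS n) (escapeDir_ne_zero hp1 (hx1 n) (hx2 n))
      (Nat.one_div_pos_of_nat (α := ℝ) (n := n))
  have he0 : Tendsto e atTop (𝓝 0) :=
    squeeze_zero_norm he tendsto_one_div_add_atTop_nhds_zero_nat
  have hcpt := isCompact_powSum_sphere hp0
  obtain ⟨⟨x', z'⟩, -, φ, hφ, hlim⟩ := (hcpt.prod hcpt).tendsto_subseq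
    (x := fun n => (x n, z n)) (fun n => ⟨hx1 n, hz1 n⟩)
  have hφ' := hφ.tendsto_atTop
  have hx : Tendsto (x ∘ φ) atTop (𝓝 x') := (continuous_fst.tendsto _).comp hlim
  have hz : Tendsto (z ∘ φ) atTop (𝓝 z') := (continuous_snd.tendsto _).comp hlim
  obtain ⟨hx'1, hx'2⟩ := attains_of_tendsto hp0 (hST.comp hφ') hTc hx (fun n => hx1 _)
    (fun n => (hx2 _).ge)
  have hTx : powSum p (app T x') = powSum p x' := by rw [hx'1, hx'2]
  have hess_le := hess_le_of_perturbation hp (fun n => (hS (φ n)).1) (hST.comp hφ')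
    (he0.comp hφ') hx hz (fun n => hx1 _) (fun n => hx2 _) (fun n => hz1 _) (fun n => hz2 _)
    (fun w hw1 hw2 => hdep x' w hTx (by rw [hw1, hw2]))
  set v := rot (grad p x') with hv
  set y := app T x' with hy
  have hDx : app D x' = 0 := app_eq_zero_of_attains hp1 hD1 hD2 hTx
  have hxv : dot (rot x') v = 1 := by
    rw [← hx'1, ← dot_grad_self hp1]; simp only [dot, rot, hv]; ring
  have hDv : app D v ≠ 0 := by
    intro h
    refine hD (eq_zero_of_app hDx h ?_)
    simp only [dot, rot] at hxv
    intro h0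
    linarith
  -- the second-order conditions for `T + D` and `T - D`
  have hplus := hess_app_le hp hD1 (x := x') (by rw [add_app, hDx, add_zero, hTx]) v
  have hminus := hess_app_le hp hD2 (x := x') (by rw [sub_app, hDx, sub_zero, hTx]) v
  rw [add_app, add_app, hDx, add_zero] at hplus
  rw [sub_app, sub_app, hDx, sub_zero] at hminus
  have hpar : hess p y (app T v + app D v) + hess p y (app T v - app D v)
      = 2 * hess p y (app T v) + 2 * hess p y (app D v) := by
    simp only [hess, Prod.fst_add, Prod.snd_add, Prod.fst_sub, Prod.snd_sub]; ring
  have hessD : hess p y (app D v) ≤ 0 := by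
    rw [← hy] at hplus hminus
    linarith
  have pos_of : ∀ a : ℝ, a ≠ 0 → 0 < |a| ^ (p - 2) := fun a ha =>
    Real.rpow_pos_of_pos (abs_pos.2 ha) _
  have nonneg_of : ∀ a : ℝ, 0 ≤ |a| ^ (p - 2) := fun a => by positivity
  have hy0 : y.1 = 0 ∨ y.2 = 0 := by
    by_contra! h
    have p1 := pos_of _ h.1
    have p2 := pos_of _ h.2
    apply hDv
    simp only [hess] at hessD
    have a1 := mul_nonneg p1.le (sq_nonneg (app D v).1)
    have a2 := mul_nonneg p2.le (sq_nonneg (app D v).2)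
    have b1 := (mul_eq_zero.1 (show |y.1| ^ (p - 2) * (app D v).1 ^ 2 = 0 by linarith)).resolve_left
      p1.ne'
    have b2 := (mul_eq_zero.1 (show |y.2| ^ (p - 2) * (app D v).2 ^ 2 = 0 by linarith)).resolve_left
      p2.ne'
    exact Prod.ext (pow_eq_zero_iff two_ne_zero |>.1 b1) (pow_eq_zero_iff two_ne_zero |>.1 b2)
  have hzero : |(0 : ℝ)| ^ (p - 2) = 0 := by
    rw [abs_zero]; exact Real.zero_rpow (by linarith)
  have hzero' : |(0 : ℝ)| ^ p = 0 := by
    rw [abs_zero]; exact Real.zero_rpow (by linarith)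
  have hTv : dot (grad p y) (app T v) = 0 := by
    rw [hy, ← dot_grad_app hp1 hTc hTx v]
    simp only [dot, hv, rot]; ring
  have hone : ∀ a : ℝ, |a| ^ p = 1 → a = 1 ∨ a = -1 := by
    intro a h
    rw [← Real.one_rpow p, Real.rpow_left_inj (abs_nonneg a) zero_le_one hp0.ne'] at h
    exact eq_or_eq_neg_of_abs_eq h
  -- `y` is a signed unit vector, and `app T v` is supported on the other coordinate
  have hycase : (y.1 = 0 ∧ (y.2 = 1 ∨ y.2 = -1) ∧ (app T v).2 = 0) ∨
      (y.2 = 0 ∧ (y.1 = 1 ∨ y.1 = -1) ∧ (app T v).1 = 0) := by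
    simp only [powSum] at hx'2
    simp only [dot, grad] at hTv
    rcases hy0 with h | h
    · rw [h, hzero', zero_add] at hx'2
      have h2 := hone _ hx'2
      refine Or.inl ⟨h, h2, ?_⟩
      rw [h, mul_zero, zero_mul, zero_add] at hTv
      have : y.2 ≠ 0 := by rcases h2 with h2 | h2 <;> rw [h2] <;> norm_num
      exact (mul_eq_zero.1 hTv).resolve_left (mul_ne_zero (pos_of _ this).ne' this)
    · rw [h, hzero', add_zero] at hx'2
      have h2 := hone _ hx'2
      refine Or.inr ⟨h, h2, ?_⟩
      rw [h, mul_zero, zero_mul, add_zero] at hTv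
      have : y.1 ≠ 0 := by rcases h2 with h2 | h2 <;> rw [h2] <;> norm_num
      exact (mul_eq_zero.1 hTv).resolve_left (mul_ne_zero (pos_of _ this).ne' this)
  have hessx : hess p x' v ≤ 0 := by
    refine hess_le.trans (le_of_eq ?_)
    rcases hycase with ⟨h1, -, h2⟩ | ⟨h1, -, h2⟩ <;> simp only [hess, h1, h2, hzero] <;> ring
  have hx0 : x'.1 = 0 ∨ x'.2 = 0 := by
    by_contra! h
    have p1 := pos_of _ h.1
    have p2 := pos_of _ h.2
    simp only [hess, hv, rot, grad] at hessx
    have a1 : 0 < |x'.1| ^ (p - 2) * (-(|x'.2| ^ (p - 2) * x'.2)) ^ 2 :=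
      mul_pos p1 (by exact (sq_nonneg _).lt_of_ne' (pow_ne_zero 2 (neg_ne_zero.2 (mul_ne_zero p2.ne' h.2))))
    have a2 : 0 ≤ |x'.2| ^ (p - 2) * (|x'.1| ^ (p - 2) * x'.1) ^ 2 := by positivity
    linarith
  -- the entry outside the cross through the `±1` has absolute value less than one, as otherwise `T`
  -- would be an isometry
  have hlt : ∀ w : ℝ × ℝ, powSum p w = 1 → dot (rot x') w ≠ 0 → ∀ s : ℝ,
      powSum p (app T w) = |s| ^ p → |s| < 1 := by
    intro w hw hw' s hs
    have h1 : |s| ^ p ≤ 1 := by rw [← hs, ← hw]; exact hTc w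
    by_contra! h2
    have h3 := Real.one_le_rpow h2 hp0.le
    exact hw' (hdep x' w hTx (by rw [hs, hw]; exact le_antisymm h1 h3))
  have hxcase : (x'.1 = 0 ∧ (x'.2 = 1 ∨ x'.2 = -1)) ∨ (x'.2 = 0 ∧ (x'.1 = 1 ∨ x'.1 = -1)) := by
    simp only [powSum] at hx'1
    rcases hx0 with h | h
    · rw [h, hzero', zero_add] at hx'1
      exact Or.inl ⟨h, hone _ hx'1⟩
    · rw [h, hzero', add_zero] at hx'1
      exact Or.inr ⟨h, hone _ hx'1⟩
  have sign_mul : ∀ a b c : ℝ, (b = 1 ∨ b = -1) → (c = 1 ∨ c = -1) → a * b = c →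
      a = 1 ∨ a = -1 := by
    rintro a b c (rfl | rfl) (rfl | rfl) h
    · exact Or.inl (by linarith)
    · exact Or.inr (by linarith)
    · exact Or.inr (by linarith)
    · exact Or.inl (by linarith)
  have sign_ne : ∀ b : ℝ, (b = 1 ∨ b = -1) → b ≠ 0 ∧ |b| ^ (p - 2) * b ≠ 0 := by
    rintro b (rfl | rfl) <;> simp
  simp only [hy, hv, app, rot, grad] at hycase
  have cancel : ∀ a b : ℝ, b ≠ 0 → a * b = 0 → a = 0 := fun a b hb h =>
    (mul_eq_zero.1 h).resolve_right hb
  have eta := Matrix.eta_fin_two T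
  rcases hxcase with ⟨h1, h2⟩ | ⟨h1, h2⟩
  · obtain ⟨n1, n2⟩ := sign_ne _ h2
    have hw : dot (rot x') (1, 0) ≠ 0 := by simpa [dot, rot] using n1
    have hw1 : powSum p (1, 0) = 1 := by simp [powSum, Real.zero_rpow hp0.ne']
    simp only [h1, mul_zero, zero_add, add_zero, mul_neg] at hycase
    rcases hycase with ⟨h3, h4, h5⟩ | ⟨h3, h4, h5⟩
    · have e1 := cancel _ _ n1 h3
      have e2 := cancel _ _ n2 (neg_eq_zero.1 h5)
      refine ⟨T 1 1, T 0 0, sign_mul _ _ _ h2 h4 rfl, hlt _ hw1 hw _ ?_, ?_⟩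
      · simp [powSum, app, e2, Real.zero_rpow hp0.ne']
      · rw [e1, e2] at eta; exact Or.inr (Or.inr (Or.inr eta))
    · have e1 := cancel _ _ n1 h3
      have e2 := cancel _ _ n2 (neg_eq_zero.1 h5)
      refine ⟨T 0 1, T 1 0, sign_mul _ _ _ h2 h4 rfl, hlt _ hw1 hw _ ?_, ?_⟩
      · simp [powSum, app, e2, Real.zero_rpow hp0.ne']
      · rw [e1, e2] at eta; exact Or.inr (Or.inl eta)
  · obtain ⟨n1, n2⟩ := sign_ne _ h2
    have hw : dot (rot x') (0, 1) ≠ 0 := by simpa [dot, rot] using n1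
    have hw1 : powSum p (0, 1) = 1 := by simp [powSum, Real.zero_rpow hp0.ne']
    simp only [h1, mul_zero, zero_add, add_zero, neg_zero] at hycase
    rcases hycase with ⟨h3, h4, h5⟩ | ⟨h3, h4, h5⟩
    · have e1 := cancel _ _ n1 h3
      have e2 := cancel _ _ n2 h5
      refine ⟨T 1 0, T 0 1, sign_mul _ _ _ h2 h4 rfl, hlt _ hw1 hw _ ?_, ?_⟩
      · simp [powSum, app, e2, Real.zero_rpow hp0.ne']
      · rw [e1, e2] at eta; exact Or.inr (Or.inr (Or.inl eta))
    · have e1 := cancel _ _ n1 h3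
      have e2 := cancel _ _ n2 h5
      refine ⟨T 0 0, T 1 1, sign_mul _ _ _ h2 h4 rfl, hlt _ hw1 hw _ ?_, ?_⟩
      · simp [powSum, app, e2, Real.zero_rpow hp0.ne']
      · rw [e1, e2] at eta; exact Or.inl eta

/-! ### Duality and conclusion -/

/-- The adjoint of a contraction of `ℓ^p_2` is a contraction of `ℓ^q_2` for the conjugate exponent
`q`. With `u` the image of `w`, both sides are compared by pairing `u` with the functional
`(|u_i|^(q-2) u_i)_i` norming it and applying Young's inequality. -/
lemma transpose_mem_contr {p q : ℝ} (hpq : p.HolderConjugate q) {A : Matrix (Fin 2) (Fin 2) ℝ}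
    (hA : A ∈ contr p) : A.transpose ∈ contr q := by
  intro w
  have hq1 : 1 < q := hpq.symm.lt
  have hq0 : 0 < q := by linarith
  set u := app A.transpose w with hu
  have h1 : dot (grad q u) u = powSum q u := dot_grad_self hq1 u
  have h2 : dot (grad q u) u = dot (app A (grad q u)) w := by
    simp only [hu, dot, app, Matrix.transpose_apply]; ring
  have h3 : powSum p (grad q u) = powSum q u := by
    have key : ∀ a : ℝ, |(|a| ^ (q - 2) * a)| ^ p = |a| ^ q := by
      intro a
      by_cases ha : a = 0
      · subst ha; simp [Real.zero_rpow hpq.pos.ne', Real.zero_rpow hq0.ne']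
      · have ha' := abs_pos.2 ha
        rw [abs_mul, abs_of_nonneg (Real.rpow_nonneg ha'.le _), ← Real.rpow_add_one ha'.ne',
          ← Real.rpow_mul ha'.le]
        congr 1
        have := hpq.symm.sub_one_mul_conj
        linarith
    simp only [powSum, grad, key]
  have h4 := hA (grad q u)
  have y1 := Real.young_inequality (app A (grad q u)).1 w.1 hpq
  have y2 := Real.young_inequality (app A (grad q u)).2 w.2 hpq
  have h5 : dot (app A (grad q u)) w ≤ powSum p (app A (grad q u)) / p + powSum q w / q := by
    simp only [dot, powSum, add_div]; linarith
  have h6 : powSum p (app A (grad q u)) / p ≤ powSum q u / p := by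
    rw [← h3]; exact div_le_div_of_nonneg_right h4 hpq.pos.le
  have h7 : powSum q u = powSum q u / p + powSum q u / q := by
    have := hpq.inv_add_inv_eq_one
    rw [div_eq_mul_inv, div_eq_mul_inv, ← mul_add, this, mul_one]
  have h8 : powSum q u / q ≤ powSum q w / q := by linarith
  exact (div_le_div_iff_of_pos_right hq0).1 h8

lemma transpose_mem_extremePoints {p q : ℝ} (hpq : p.HolderConjugate q)
    {A : Matrix (Fin 2) (Fin 2) ℝ} (hA : A ∈ Set.extremePoints ℝ (contr p)) :
    A.transpose ∈ Set.extremePoints ℝ (contr q) := by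
  rw [mem_extremePoints_contr_iff hpq.lt] at hA
  rw [mem_extremePoints_contr_iff hpq.symm.lt]
  refine ⟨transpose_mem_contr hpq hA.1, fun D h1 h2 => ?_⟩
  have h1' := transpose_mem_contr hpq.symm h1
  have h2' := transpose_mem_contr hpq.symm h2
  rw [Matrix.transpose_add, Matrix.transpose_transpose] at h1'
  rw [Matrix.transpose_sub, Matrix.transpose_transpose] at h2'
  exact Matrix.transpose_eq_zero.1 (hA.2 _ h1' h2')

lemma IsDegenerate.of_transpose {T : Matrix (Fin 2) (Fin 2) ℝ} (h : IsDegenerate T.transpose) :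
    IsDegenerate T := by
  obtain ⟨e, s, he, hs, h⟩ := h
  refine ⟨e, s, he, hs, ?_⟩
  rw [← Matrix.transpose_transpose T]
  have tr : ∀ a b c d : ℝ, (!![a, b; c, d]).transpose = !![a, c; b, d] := by
    intro a b c d; ext i j; fin_cases i <;> fin_cases j <;> rfl
  rcases h with h | h | h | h <;> rw [h, tr] <;> simp

/-- A degenerate operator factors through `diag(1, s)` by signed permutations, which are isometries
of `ℓ^p_2`. -/
lemma IsDegenerate.exists_factorization (p : ℝ) {T : Matrix (Fin 2) (Fin 2) ℝ}
    (h : IsDegenerate T) :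
    ∃ (s : ℝ) (U V : Matrix (Fin 2) (Fin 2) ℝ), |s| < 1 ∧
      (∀ z : ℝ × ℝ, pnorm p (app U z) = pnorm p z) ∧ Function.Surjective (app U) ∧
      (∀ z : ℝ × ℝ, pnorm p (app V z) = pnorm p z) ∧ Function.Surjective (app V) ∧
      T = V * !![(1 : ℝ), 0; 0, s] * U := by
  obtain ⟨e, s, he, hs, h⟩ := h
  have hee : e * e = 1 := by rcases he with rfl | rfl <;> norm_num
  have hea : |e| = 1 := by rcases he with rfl | rfl <;> norm_num
  have i1 : ∀ z, pnorm p (app !![e, 0; 0, 1] z) = pnorm p z := by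
    intro z; simp [pnorm, app, abs_mul, hea]
  have i2 : ∀ z, pnorm p (app !![0, 1; e, 0] z) = pnorm p z := by
    intro z; simp [pnorm, app, abs_mul, hea, add_comm]
  have j1 : ∀ z, pnorm p (app !![1, 0; 0, 1] z) = pnorm p z := by
    intro z; simp [pnorm, app]
  have j2 : ∀ z, pnorm p (app !![0, 1; 1, 0] z) = pnorm p z := by
    intro z; simp [pnorm, app, add_comm]
  have s1 : Function.Surjective (app !![e, 0; 0, 1]) := fun z =>
    ⟨(e * z.1, z.2), by ext <;> simp [app, ← mul_assoc, hee]⟩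
  have s2 : Function.Surjective (app !![0, 1; e, 0]) := fun z =>
    ⟨(e * z.2, z.1), by ext <;> simp [app, ← mul_assoc, hee]⟩
  have t1 : Function.Surjective (app !![1, 0; 0, 1]) := fun z => ⟨z, by ext <;> simp [app]⟩
  have t2 : Function.Surjective (app !![0, 1; 1, 0]) := fun z =>
    ⟨(z.2, z.1), by ext <;> simp [app]⟩
  rcases h with h | h | h | h
  · exact ⟨s, !![1, 0; 0, 1], !![e, 0; 0, 1], hs, j1, t1, i1, s1, by rw [h]; simp⟩
  · exact ⟨s, !![0, 1; 1, 0], !![e, 0; 0, 1], hs, j2, t2, i1, s1, by rw [h]; simp⟩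
  · exact ⟨s, !![1, 0; 0, 1], !![0, 1; e, 0], hs, j1, t1, i2, s2, by rw [h]; simp⟩
  · exact ⟨s, !![0, 1; 1, 0], !![0, 1; e, 0], hs, j2, t2, i2, s2, by rw [h]; simp⟩

end aux

/-- For p ≠ 2, any operator in the operator-norm closure of the extreme points of the unit
  ball of L(ℓ^p_2, ℓ^p_2) is either itself extreme or of the form V ∘ diag(1, s) ∘ U with
  |s| < 1 and U, V surjective linear isometries of ℓ^p_2. -/
theorem stmt_16 (p : ℝ) (hp : 1 < p) (hp2 : p ≠ 2)
    (T : Matrix (Fin 2) (Fin 2) ℝ)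
    (hT : ∀ ε : ℝ, 0 < ε → ∃ S ∈ Set.extremePoints ℝ (unitBall p p), opNorm p p (T - S) < ε) :
    T ∈ Set.extremePoints ℝ (unitBall p p) ∨
    ∃ (s : ℝ) (U V : Matrix (Fin 2) (Fin 2) ℝ), |s| < 1 ∧
      (∀ z : ℝ × ℝ, pnorm p (app U z) = pnorm p z) ∧ Function.Surjective (app U) ∧
      (∀ z : ℝ × ℝ, pnorm p (app V z) = pnorm p z) ∧ Function.Surjective (app V) ∧
      T = V * !![(1 : ℝ), 0; 0, s] * U := by
  have hp0 : 0 < p := by linarith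
  rw [unitBall_eq_contr hp0] at hT ⊢
  by_cases hTe : T ∈ Set.extremePoints ℝ (contr p)
  · exact Or.inl hTe
  refine Or.inr (IsDegenerate.exists_factorization p ?_)
  choose S hS hST using fun n : ℕ => hT (1 / ((n : ℝ) + 1)) Nat.one_div_pos_of_nat
  have hlim : Filter.Tendsto S Filter.atTop (nhds T) := by
    refine tendsto_pi_nhds.2 fun i => tendsto_pi_nhds.2 fun j => ?_
    rw [tendsto_iff_norm_sub_tendsto_zero]
    refine squeeze_zero (fun n => norm_nonneg _) (fun n => ?_)
      (tendsto_one_div_add_atTop_nhds_zero_nat (𝕜 := ℝ))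
    rw [norm_sub_rev]
    exact (abs_entry_le hp0 (T - S n) i j).trans (hST n).le
  rcases lt_or_gt_of_ne hp2 with hlt | hgt
  · have hpq := Real.HolderConjugate.conjExponent hp
    have hq : 2 < p.conjExponent := by
      rw [Real.conjExponent, lt_div_iff₀ (by linarith)]; linarith
    refine IsDegenerate.of_transpose (isDegenerate_of_limit hq
      (fun n => transpose_mem_extremePoints hpq (hS n))
      ((continuous_id.matrix_transpose.tendsto T).comp hlim) fun h => hTe ?_)
    simpa using transpose_mem_extremePoints hpq.symm h
  · exact isDegenerate_of_limit hgt hS hlim hTe
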